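/- Let k ≥ 1, let b₁, …, b_k be positive integers and m ≥ 0, and let A be a symmetric 0-1 matrix with zero diagonal of size (b₁ + ⋯ + b_k + m), written in block form with diagonal blocks B₁ (b₁×b₁), …, B_k (b_k×b_k), C (m×m), off-diagonal blocks B_{ij} (b_i×b_j) for 1 ≤ i < j ≤ k (and their transposes below the diagonal), and blocks N_i (b_i×m) in the last block column (and their transposes in the last block row). Assume: each B_i has constant row sums; each B_{ij} has constant row sums and constant column sums; each column of each N_i contains exactly 0, b_i/2, or b_i ones; and each N_i has constant row sums. Let Ñ_i be obtained from N_i by replacing each column with exactly b_i/2 ones by its 0-1 complement, and let Ã be the matrix obtained from A by replacing each N_i by Ñ_i (and each transpose block accordingly). Let D be the diagonal matrix of row sums of A (which equals the diagonal matrix of row sums of Ã). Then for all real λ, x, y: det(λI − A + xD + yJ) = det(λI − Ã + xD + yJ), where I and J are the identity and all-ones matrices of the same size as A. -/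

import Mathlib

/-!
The switched matrix is conjugate to the original one by an explicit involution. For a block of
size `n` let `Qₙ = (2/n) J - I`, a symmetric matrix with `Qₙ² = I` and `Qₙ 1 = 1`, and let `Q` be the
block diagonal matrix with blocks `Q_{b₁}, …, Q_{b_k}, I_m`. Then `Q` intertwines every term of
`λI - A + xD + yJ` with its switched counterpart:

* the upper left part `P` of `A` commutes with the upper left part of `Q`, because `P` is symmetric
  with constant row sums in every block (`gmQ_comm`);
* `Qₙ v = v` for `v = 0` and `v = 1`, while `Qₙ v = 1 - v` when the entries of `v` sum to `n/2`, so
  that `Q` carries `N` to its switch (`gmQ_mul_conn`);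
* `D` is constant on every block, since each `N_i` has constant row sums, hence commutes with `Q`;
* `J` commutes with `Q`, since the rows and columns of `Q` sum to `1`.

Cancelling `det Q ≠ 0` gives the equality of determinants.
-/

open Matrix

noncomputable section

/-- The symmetric block matrix with diagonal blocks `Bd i` (of size `b i`) and `C`
(of size `m`), off-diagonal blocks `Boff i j` for `i < j` (and their transposes below
the diagonal), and blocks `N i` in the last block column (and their transposes in the
last block row). -/
def gmA {k m : ℕ} (b : Fin k → ℕ)
    (Bd : ∀ i, Matrix (Fin (b i)) (Fin (b i)) ℝ)
    (Boff : ∀ i j, Matrix (Fin (b i)) (Fin (b j)) ℝ)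
    (C : Matrix (Fin m) (Fin m) ℝ)
    (N : ∀ i, Matrix (Fin (b i)) (Fin m) ℝ) :
    Matrix ((Σ i : Fin k, Fin (b i)) ⊕ Fin m) ((Σ i : Fin k, Fin (b i)) ⊕ Fin m) ℝ :=
  Matrix.of fun p q =>
    match p, q with
    | Sum.inl ⟨i, a⟩, Sum.inl ⟨j, c⟩ =>
        if h : i = j then Bd i a (Fin.cast (congrArg b h).symm c)
        else if i < j then Boff i j a c
        else Boff j i c a
    | Sum.inl ⟨i, a⟩, Sum.inr w => N i a w
    | Sum.inr w, Sum.inl ⟨i, a⟩ => N i a w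
    | Sum.inr w, Sum.inr w' => C w w'

/-- The GM* switch of the family of connection blocks: every column of `N i` containing
exactly `b i / 2` ones is replaced by its `0`-`1` complement. -/
def gmTilde {k m : ℕ} (b : Fin k → ℕ) (N : ∀ i, Matrix (Fin (b i)) (Fin m) ℝ) :
    ∀ i, Matrix (Fin (b i)) (Fin m) ℝ := fun i =>
  Matrix.of fun a w =>
    if (∑ a', N i a' w) = (b i : ℝ) / 2 then 1 - N i a w else N i a w

/-- The block diagonal matrix with diagonal blocks `(2 / b i) J - I`. -/
def gmQ {k : ℕ} (b : Fin k → ℕ) :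
    Matrix (Σ i : Fin k, Fin (b i)) (Σ i : Fin k, Fin (b i)) ℝ :=
  Matrix.of fun p q => (if p.1 = q.1 then 2 / (b p.1 : ℝ) else 0) - if p = q then 1 else 0

lemma gmQ_transpose {k : ℕ} (b : Fin k → ℕ) : (gmQ b)ᵀ = gmQ b := by
  ext p q
  simp only [gmQ, transpose_apply, of_apply]
  by_cases h : p.1 = q.1
  · simp [h, eq_comm]
  · have h' : ¬ q.1 = p.1 := fun e => h e.symm
    simp [h, h', eq_comm]

lemma gmQ_mul_apply {k : ℕ} (b : Fin k → ℕ) {W : Type*}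
    (X : Matrix (Σ i : Fin k, Fin (b i)) W ℝ) (i : Fin k) (a : Fin (b i)) (w : W) :
    (gmQ b * X) ⟨i, a⟩ w = 2 / (b i : ℝ) * ∑ a', X ⟨i, a'⟩ w - X ⟨i, a⟩ w := by
  simp only [mul_apply, gmQ, of_apply, sub_mul, Finset.sum_sub_distrib, ite_mul, zero_mul, one_mul,
    Finset.sum_ite_eq, Finset.mem_univ, if_true]
  congr 1
  rw [Fintype.sum_sigma, Finset.sum_eq_single i]
  · simp [Finset.mul_sum]
  · intro j _ hj
    simp [Ne.symm hj]
  · simp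

lemma mul_gmQ_apply {k : ℕ} (b : Fin k → ℕ) {W : Type*}
    (X : Matrix W (Σ i : Fin k, Fin (b i)) ℝ) (i : Fin k) (a : Fin (b i)) (w : W) :
    (X * gmQ b) w ⟨i, a⟩ = 2 / (b i : ℝ) * ∑ a', X w ⟨i, a'⟩ - X w ⟨i, a⟩ := by
  have := gmQ_mul_apply b Xᵀ i a w
  rw [← gmQ_transpose, ← transpose_mul] at this
  simpa using this

lemma gmQ_mul_self {k : ℕ} (b : Fin k → ℕ) (hb : ∀ i, 0 < b i) : gmQ b * gmQ b = 1 := by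
  ext ⟨i, a⟩ q
  have hbi : (b i : ℝ) ≠ 0 := by exact_mod_cast (hb i).ne'
  have h1 : ∑ a', gmQ b ⟨i, a'⟩ q = if i = q.1 then 1 else 0 := by
    obtain ⟨j, c⟩ := q
    by_cases h : i = j
    · subst h
      simp [gmQ, Finset.sum_sub_distrib]
      field_simp
      norm_num
    · simp [gmQ, h]
  rw [gmQ_mul_apply, h1]
  simp only [gmQ, of_apply, one_apply]
  split_ifs <;> ring

/-- A symmetric matrix with constant row sums in each block commutes with `gmQ`. Writing `r i j` for
the row sum in block `(i, j)`, symmetry lets the entries of that block be summed in two ways,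
`b i * r i j = b j * r j i`, which is what both products require. -/
lemma gmQ_comm {k : ℕ} (b : Fin k → ℕ) (hb : ∀ i, 0 < b i)
    (P : Matrix (Σ i : Fin k, Fin (b i)) (Σ i : Fin k, Fin (b i)) ℝ)
    (hP : ∀ p q, P p q = P q p) (r : Fin k → Fin k → ℝ)
    (hr : ∀ i j a, ∑ c, P ⟨i, a⟩ ⟨j, c⟩ = r i j) : gmQ b * P = P * gmQ b := by
  ext ⟨i, a⟩ ⟨j, c⟩
  have hbi : (b i : ℝ) ≠ 0 := by exact_mod_cast (hb i).ne'
  have hbj : (b j : ℝ) ≠ 0 := by exact_mod_cast (hb j).ne'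
  have hcol : ∑ a', P ⟨i, a'⟩ ⟨j, c⟩ = r j i := by
    rw [← hr j i c]
    exact Finset.sum_congr rfl fun _ _ => hP _ _
  have hdc : (b i : ℝ) * r i j = b j * r j i := by
    have h1 : ∑ a', ∑ c', P ⟨i, a'⟩ ⟨j, c'⟩ = b i * r i j := by simp [hr]
    have h2 : ∑ c', ∑ a', P ⟨j, c'⟩ ⟨i, a'⟩ = b j * r j i := by simp [hr]
    rw [← h1, ← h2, Finset.sum_comm]
    exact Finset.sum_congr rfl fun _ _ => Finset.sum_congr rfl fun _ _ => hP _ _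
  rw [gmQ_mul_apply, mul_gmQ_apply, hcol, hr]
  congr 1
  field_simp
  linarith

/-- The family of connection blocks stacked into a single matrix. -/
def gmConn {k m : ℕ} (b : Fin k → ℕ) (N : ∀ i, Matrix (Fin (b i)) (Fin m) ℝ) :
    Matrix (Σ i : Fin k, Fin (b i)) (Fin m) ℝ := Matrix.of fun p w => N p.1 p.2 w

lemma gmQ_mul_conn {k m : ℕ} (b : Fin k → ℕ) (hb : ∀ i, 0 < b i)
    (N : ∀ i, Matrix (Fin (b i)) (Fin m) ℝ)
    (hN01 : ∀ i a w, N i a w = 0 ∨ N i a w = 1)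
    (hNcol : ∀ i w, (∑ a, N i a w) = 0 ∨ (∑ a, N i a w) = (b i : ℝ) / 2 ∨
      (∑ a, N i a w) = (b i : ℝ)) :
    gmQ b * gmConn b N = gmConn b (gmTilde b N) := by
  ext ⟨i, a⟩ w
  have hbi : (0 : ℝ) < b i := by exact_mod_cast hb i
  rw [gmQ_mul_apply]
  simp only [gmConn, gmTilde, of_apply]
  rcases hNcol i w with h | h | h
  · -- A 0-1 column with sum `0` vanishes.
    have h0 : N i a w = 0 :=
      (Finset.sum_eq_zero_iff_of_nonneg fun a' _ => by
        rcases hN01 i a' w with e | e <;> simp [e]).1 h a (Finset.mem_univ a)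
    rw [h, if_neg (by linarith), h0]
    ring
  · rw [if_pos h, h]
    field_simp
  · -- The complement of a 0-1 column with sum `b i` vanishes.
    have h' : ∑ a', (1 - N i a' w) = 0 := by simp [Finset.sum_sub_distrib, h]
    have h1 : 1 - N i a w = 0 :=
      (Finset.sum_eq_zero_iff_of_nonneg fun a' _ => by
        rcases hN01 i a' w with e | e <;> simp [e]).1 h' a (Finset.mem_univ a)
    rw [h, if_neg (by linarith)]
    field_simp
    linarith

lemma gmA_eq_fromBlocks {k m : ℕ} (b : Fin k → ℕ)
    (Bd : ∀ i, Matrix (Fin (b i)) (Fin (b i)) ℝ)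
    (Boff : ∀ i j, Matrix (Fin (b i)) (Fin (b j)) ℝ)
    (C : Matrix (Fin m) (Fin m) ℝ)
    (N N' : ∀ i, Matrix (Fin (b i)) (Fin m) ℝ) :
    gmA b Bd Boff C N =
      fromBlocks (gmA b Bd Boff C N').toBlocks₁₁ (gmConn b N) (gmConn b N)ᵀ C := by
  ext (⟨i, a⟩ | w) (⟨j, c⟩ | w') <;> rfl

lemma gmA_inl_symm {k m : ℕ} (b : Fin k → ℕ)
    (Bd : ∀ i, Matrix (Fin (b i)) (Fin (b i)) ℝ) (hBdsymm : ∀ i, (Bd i).IsSymm)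
    (Boff : ∀ i j, Matrix (Fin (b i)) (Fin (b j)) ℝ)
    (C : Matrix (Fin m) (Fin m) ℝ)
    (N : ∀ i, Matrix (Fin (b i)) (Fin m) ℝ) (p q : Σ i : Fin k, Fin (b i)) :
    gmA b Bd Boff C N (.inl p) (.inl q) = gmA b Bd Boff C N (.inl q) (.inl p) := by
  obtain ⟨i, a⟩ := p
  obtain ⟨j, c⟩ := q
  rcases lt_trichotomy i j with h | h | h
  · simp [gmA, h, h.ne, h.ne', h.not_gt]
  · subst h
    simpa [gmA] using (hBdsymm i).apply c a
  · simp [gmA, h, h.ne, h.ne', h.not_gt]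

lemma gmA_row {k m : ℕ} (b : Fin k → ℕ)
    (Bd : ∀ i, Matrix (Fin (b i)) (Fin (b i)) ℝ)
    (hBdrow : ∀ i, ∃ r : ℝ, ∀ a, ∑ c, Bd i a c = r)
    (Boff : ∀ i j, Matrix (Fin (b i)) (Fin (b j)) ℝ)
    (hBoffrow : ∀ i j, i < j → ∃ r : ℝ, ∀ a, ∑ c, Boff i j a c = r)
    (hBoffcol : ∀ i j, i < j → ∃ r : ℝ, ∀ c, ∑ a, Boff i j a c = r)
    (C : Matrix (Fin m) (Fin m) ℝ)
    (N : ∀ i, Matrix (Fin (b i)) (Fin m) ℝ) (i j : Fin k) :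
    ∃ r : ℝ, ∀ a, ∑ c, gmA b Bd Boff C N (.inl ⟨i, a⟩) (.inl ⟨j, c⟩) = r := by
  rcases lt_trichotomy i j with h | h | h
  · simpa [gmA, h, h.ne] using hBoffrow i j h
  · subst h
    simpa [gmA] using hBdrow i
  · simpa [gmA, h.ne', h.not_gt] using hBoffcol j i h

/-- `(k+1)`-block GM* switching: under the GM* conditions, the matrices
`A` and `Ã` have the same generalized characteristic polynomial
`det (l•I - A + x•D + y•J)`, where `D` is the diagonal matrix of row sums of `A`. -/
theorem stmt_19 (k m : ℕ) (hk : 1 ≤ k) (b : Fin k → ℕ) (hb : ∀ i, 0 < b i)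
    (Bd : ∀ i, Matrix (Fin (b i)) (Fin (b i)) ℝ)
    (hBdsymm : ∀ i, (Bd i).IsSymm)
    (hBddiag : ∀ i a, Bd i a a = 0)
    (hBd01 : ∀ i a c, Bd i a c = 0 ∨ Bd i a c = 1)
    (hBdrow : ∀ i, ∃ r : ℝ, ∀ a, ∑ c, Bd i a c = r)
    (Boff : ∀ i j, Matrix (Fin (b i)) (Fin (b j)) ℝ)
    (hBoff01 : ∀ i j, i < j → ∀ a c, Boff i j a c = 0 ∨ Boff i j a c = 1)
    (hBoffrow : ∀ i j, i < j → ∃ r : ℝ, ∀ a, ∑ c, Boff i j a c = r)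
    (hBoffcol : ∀ i j, i < j → ∃ r : ℝ, ∀ c, ∑ a, Boff i j a c = r)
    (C : Matrix (Fin m) (Fin m) ℝ)
    (hCsymm : C.IsSymm) (hCdiag : ∀ w, C w w = 0)
    (hC01 : ∀ w w', C w w' = 0 ∨ C w w' = 1)
    (N : ∀ i, Matrix (Fin (b i)) (Fin m) ℝ)
    (hN01 : ∀ i a w, N i a w = 0 ∨ N i a w = 1)
    (hNcol : ∀ i w, (∑ a, N i a w) = 0 ∨ (∑ a, N i a w) = (b i : ℝ) / 2 ∨
      (∑ a, N i a w) = (b i : ℝ))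
    (hNrow : ∀ i, ∃ r : ℝ, ∀ a, ∑ w, N i a w = r)
    (D : Matrix ((Σ i : Fin k, Fin (b i)) ⊕ Fin m) ((Σ i : Fin k, Fin (b i)) ⊕ Fin m) ℝ)
    (hD : D = Matrix.diagonal fun p => ∑ q, gmA b Bd Boff C N p q) :
    ∀ l x y : ℝ,
      (l • (1 : Matrix ((Σ i : Fin k, Fin (b i)) ⊕ Fin m)
            ((Σ i : Fin k, Fin (b i)) ⊕ Fin m) ℝ) -
          gmA b Bd Boff C N + x • D + y • (Matrix.of fun _ _ => (1 : ℝ))).det =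
      (l • (1 : Matrix ((Σ i : Fin k, Fin (b i)) ⊕ Fin m)
            ((Σ i : Fin k, Fin (b i)) ⊕ Fin m) ℝ) -
          gmA b Bd Boff C (gmTilde b N) + x • D +
          y • (Matrix.of fun _ _ => (1 : ℝ))).det := by
  classical
  intro l x y
  choose r hr using gmA_row b Bd hBdrow Boff hBoffrow hBoffcol C N
  choose s hs using hNrow
  set Q : Matrix ((Σ i : Fin k, Fin (b i)) ⊕ Fin m) ((Σ i : Fin k, Fin (b i)) ⊕ Fin m) ℝ :=
    fromBlocks (gmQ b) 0 0 1 with hQ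
  have hQQ : Q * Q = 1 := by
    simp [hQ, fromBlocks_multiply, gmQ_mul_self b hb]
  have hQA : Q * gmA b Bd Boff C N = gmA b Bd Boff C (gmTilde b N) * Q := by
    have hN := gmQ_mul_conn b hb N hN01 hNcol
    have hN' : (gmConn b (gmTilde b N))ᵀ * gmQ b = (gmConn b N)ᵀ := by
      rw [← hN, transpose_mul, gmQ_transpose, Matrix.mul_assoc, gmQ_mul_self b hb, Matrix.mul_one]
    have hP : gmQ b * (gmA b Bd Boff C N).toBlocks₁₁ = (gmA b Bd Boff C N).toBlocks₁₁ * gmQ b :=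
      gmQ_comm b hb _ (fun p q => gmA_inl_symm b Bd hBdsymm Boff C N p q) r hr
    rw [gmA_eq_fromBlocks b Bd Boff C N N, gmA_eq_fromBlocks b Bd Boff C (gmTilde b N) N, hQ,
      fromBlocks_multiply, fromBlocks_multiply]
    simp [hN, hN', hP]
  have hQD : Q * D = D * Q := by
    -- Row sums of `A` are constant on each block, and `Q` has no entries between distinct blocks.
    have hd : ∀ i a, ∑ q, gmA b Bd Boff C N (.inl ⟨i, a⟩) q = ∑ j, r i j + s i := by
      intro i a
      rw [Fintype.sum_sum_type, Fintype.sum_sigma, ← hs i a]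
      simp only [hr]
      rfl
    rw [hD]
    ext p q
    rw [mul_diagonal, diagonal_mul]
    rcases p with ⟨i, a⟩ | w <;> rcases q with ⟨j, c⟩ | w'
    · rw [hd, hd]
      by_cases h : i = j
      · subst h
        ring
      · simp [hQ, gmQ, h]
    · simp [hQ]
    · simp [hQ]
    · by_cases h : w = w'
      · subst h
        ring
      · simp [hQ, h]
  have hQJ : Q * (Matrix.of fun _ _ => (1 : ℝ)) = (Matrix.of fun _ _ => (1 : ℝ)) * Q := by
    have hJ : (Matrix.of fun _ _ => (1 : ℝ) :
        Matrix ((Σ i : Fin k, Fin (b i)) ⊕ Fin m) ((Σ i : Fin k, Fin (b i)) ⊕ Fin m) ℝ) =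
        fromBlocks (Matrix.of fun _ _ => 1) (Matrix.of fun _ _ => 1)
          (Matrix.of fun _ _ => 1) (Matrix.of fun _ _ => 1) := by
      ext (_ | _) (_ | _) <;> rfl
    have hne : ∀ i, (b i : ℝ) ≠ 0 := fun i => by exact_mod_cast (hb i).ne'
    have hl : ∀ W : Type, gmQ b * (Matrix.of fun _ _ => (1 : ℝ) : Matrix (Σ i : Fin k, Fin (b i)) W ℝ) =
        Matrix.of fun _ _ => 1 := by
      intro W
      ext ⟨i, a⟩ w
      rw [gmQ_mul_apply]
      have := hne i
      simp
      field_simp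
      norm_num
    have hr' : ∀ W : Type, (Matrix.of fun _ _ => (1 : ℝ) : Matrix W (Σ i : Fin k, Fin (b i)) ℝ) * gmQ b =
        Matrix.of fun _ _ => 1 := by
      intro W
      ext w ⟨i, a⟩
      rw [mul_gmQ_apply]
      have := hne i
      simp
      field_simp
      norm_num
    rw [hJ, hQ, fromBlocks_multiply, fromBlocks_multiply]
    simp [hl, hr']
  have hdet : Q.det ≠ 0 := fun h => by
    have := congrArg Matrix.det hQQ
    simp [h] at this
  apply mul_left_cancel₀ hdet
  rw [← det_mul, mul_comm Q.det, ← det_mul]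
  congr 1
  simp only [mul_add, mul_sub, add_mul, sub_mul, mul_smul_comm, smul_mul_assoc, hQA, hQD, hQJ,
    mul_one, one_mul]
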